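/- arXiv:1103.3957 — 4 statements merged into one kernel-verified Lean document; each statement's English description precedes it below -/
import Mathlib

section
/- Let Λ be a unimodular lattice, w ∈ Λ a primitive element with (w,w) = 2, and N ⊆ Λ a saturated ℤ-submodule (i.e. Λ/N is torsion-free) containing w. Then there exists γ ∈ N with (γ,w) = 1 if and only if there exists β ∈ N such that (β,w) = 0, β ∉ 2Λ, and (β,x) ∈ 2ℤ for every x ∈ w⊥. -/
/-!
Up to the sign of `β`, the two conditions correspond under `β = w - 2γ`, i.e. `γ = (w - β) / 2`.

Given `γ` with `(γ,w) = 1`, the element `w - 2γ` is orthogonal to `w`, pairs evenly with `w⊥`,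
and is not in `2Λ` because `w` is primitive.

Conversely, let `β ∈ N` be orthogonal to `w`, outside `2Λ`, and even on `w⊥`. Unimodularity says
that an element pairing evenly with all of `Λ` lies in `2Λ`; so some `y ∈ Λ` has `(β,y)` odd.
As `(w,w) = 2` and `(β,w) = 0`, subtracting a multiple of `w` from `y` gives either an element
of `w⊥` (impossible) or `u` with `(u,w) = 1` and `(β,u)` odd. Every `z ∈ Λ` is
`(z,w) u` plus an element of `w⊥`, so `(β,z) ≡ (w,z)` modulo `2`. Thus `β + w` pairs evenly with
`Λ`, hence `β + w = 2γ` with `γ ∈ Λ`; saturation puts `γ` in `N`, and `(γ,w) = 1`.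
-/

section LatticePreliminaries

variable {V : Type*} [AddCommGroup V] [Module ℚ V]

/-- The dual lattice of a ℤ-submodule `L` of a ℚ-vector space `V` with respect to a
bilinear form `B`: the elements of the ℚ-span of `L` pairing integrally with all of `L`. -/
def dualIn (B : V →ₗ[ℚ] V →ₗ[ℚ] ℚ) (L : Submodule ℤ V) : Submodule ℤ V where
  carrier := {α | α ∈ Submodule.span ℚ (L : Set V) ∧ ∀ β ∈ L, ∃ n : ℤ, B α β = (n : ℚ)}
  zero_mem' := ⟨Submodule.zero_mem _, fun β _ => ⟨0, by simp⟩⟩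
  add_mem' := by
    rintro a b ⟨haspan, ha⟩ ⟨hbspan, hb⟩
    refine ⟨Submodule.add_mem _ haspan hbspan, fun β hβ => ?_⟩
    obtain ⟨m, hm⟩ := ha β hβ
    obtain ⟨n, hn⟩ := hb β hβ
    refine ⟨m + n, ?_⟩
    rw [map_add, LinearMap.add_apply, hm, hn]
    push_cast; ring
  smul_mem' := by
    rintro z a ⟨haspan, ha⟩
    have hza : z • a = (z : ℚ) • a := (Int.cast_smul_eq_zsmul ℚ z a).symm
    refine ⟨by rw [hza]; exact Submodule.smul_mem _ _ haspan, fun β hβ => ?_⟩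
    obtain ⟨n, hn⟩ := ha β hβ
    refine ⟨z * n, ?_⟩
    rw [hza, map_smul, LinearMap.smul_apply, hn, smul_eq_mul]
    push_cast; ring

/-- The sublattice of elements of `Λ` orthogonal to `w`. -/
def perpIn (B : V →ₗ[ℚ] V →ₗ[ℚ] ℚ) (Λ : Submodule ℤ V) (w : V) : Submodule ℤ V where
  carrier := {x | x ∈ Λ ∧ B x w = 0}
  zero_mem' := ⟨Λ.zero_mem, by simp⟩
  add_mem' := by
    rintro a b ⟨ha, ha0⟩ ⟨hb, hb0⟩
    exact ⟨Λ.add_mem ha hb, by rw [map_add, LinearMap.add_apply, ha0, hb0, add_zero]⟩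
  smul_mem' := by
    rintro z a ⟨ha, ha0⟩
    refine ⟨Λ.smul_mem z ha, ?_⟩
    rw [← Int.cast_smul_eq_zsmul ℚ z a, map_smul, LinearMap.smul_apply, ha0, smul_zero]

/-- The set `Γ` inside `(L ⊗ ℚ) ⊕ ℚσ` (modelled as `V × ℚ`, with `σ = (0,1)`):
pairs `(α, k·σ/2)` with `α ∈ L*`, `k ∈ ℤ`, and `k` even iff `α ∈ L`. -/
def GammaSet (B : V →ₗ[ℚ] V →ₗ[ℚ] ℚ) (L : Submodule ℤ V) : Set (V × ℚ) :=
  {p | p.1 ∈ dualIn B L ∧ ∃ k : ℤ, p.2 = (k : ℚ) / 2 ∧ (Even k ↔ p.1 ∈ L)}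

/-- The subgroup `{(β,γ) : γ ∈ Λ}` of values of the bilinear form against `β`. -/
def valueGroup (B : V →ₗ[ℚ] V →ₗ[ℚ] ℚ) (β : V) (Λ : Submodule ℤ V) : AddSubgroup ℚ where
  carrier := {q | ∃ γ ∈ Λ, B β γ = q}
  zero_mem' := ⟨0, Λ.zero_mem, by simp⟩
  add_mem' := by
    rintro q r ⟨γ, hγ, hq⟩ ⟨δ, hδ, hr⟩
    exact ⟨γ + δ, Λ.add_mem hγ hδ, by rw [map_add, hq, hr]⟩
  neg_mem' := by
    rintro q ⟨γ, hγ, hq⟩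
    exact ⟨-γ, Λ.neg_mem hγ, by rw [map_neg, hq]⟩

end LatticePreliminaries

/-- Let `Λ` be a unimodular lattice, `w ∈ Λ` primitive with `(w,w) = 2`, and `N ⊆ Λ`
a saturated ℤ-submodule containing `w`.  Then there exists `γ ∈ N` with `(γ,w) = 1` iff
there exists `β ∈ N` with `(β,w) = 0`, `β ∉ 2Λ`, and `(β,x) ∈ 2ℤ` for every `x ∈ w⊥`. -/
theorem statement_8 {V : Type*} [AddCommGroup V] [Module ℚ V]
    (B : V →ₗ[ℚ] V →ₗ[ℚ] ℚ) (Λ : Submodule ℤ V)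
    (hfg : Λ.FG)
    (hspan : Submodule.span ℚ (Λ : Set V) = ⊤)
    (hsymm : ∀ x y, B x y = B y x)
    (hnd : ∀ x, (∀ y, B x y = 0) → x = 0)
    (hint : ∀ x ∈ Λ, ∀ y ∈ Λ, ∃ n : ℤ, B x y = (n : ℚ))
    (huni : dualIn B Λ = Λ)
    (w : V) (hwΛ : w ∈ Λ)
    (hprim : ∀ n : ℤ, 2 ≤ n → ∀ x ∈ Λ, w ≠ n • x)
    (hw2 : B w w = 2)
    (N : Submodule ℤ V) (hNΛ : N ≤ Λ)
    (hsat : ∀ n : ℤ, n ≠ 0 → ∀ x ∈ Λ, n • x ∈ N → x ∈ N)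
    (hwN : w ∈ N) :
    ((∃ γ ∈ N, B γ w = 1) ↔
      ∃ β ∈ N, B β w = 0 ∧ (¬ ∃ δ ∈ Λ, β = (2 : ℤ) • δ) ∧
        ∀ x ∈ perpIn B Λ w, ∃ n : ℤ, B β x = ((2 * n : ℤ) : ℚ)) := by
  have half_mem : ∀ x : V, (∀ z ∈ Λ, ∃ n : ℤ, B x z = 2 * (n : ℚ)) →
      ∃ δ ∈ Λ, x = (2 : ℤ) • δ := by
    intro x hx
    refine ⟨(1 / 2 : ℚ) • x, ?_, ?_⟩
    · rw [← huni]
      refine ⟨by rw [hspan]; trivial, fun z hz => ?_⟩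
      obtain ⟨n, hn⟩ := hx z hz
      refine ⟨n, ?_⟩
      rw [map_smul, LinearMap.smul_apply, hn, smul_eq_mul]
      ring
    · rw [← Int.cast_smul_eq_zsmul ℚ, smul_smul]
      norm_num
  have hBz : ∀ (k : ℤ) (x y : V), B x (k • y) = (k : ℚ) * B x y := by
    intro k x y
    rw [← Int.cast_smul_eq_zsmul ℚ, map_smul, smul_eq_mul]
  constructor
  · rintro ⟨γ, hγN, hγw⟩
    have hB : ∀ x, B (w - (2 : ℤ) • γ) x = B w x - 2 * B γ x := by
      intro x
      rw [hsymm, map_sub, hBz, hsymm x w, hsymm x γ]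
      norm_num
    refine ⟨w - (2 : ℤ) • γ, N.sub_mem hwN (N.smul_mem _ hγN), ?_, ?_, ?_⟩
    · rw [hB, hw2, hγw]
      norm_num
    · rintro ⟨δ, hδ, h⟩
      refine hprim 2 le_rfl (δ + γ) (Λ.add_mem hδ (hNΛ hγN)) ?_
      rw [smul_add, ← h, sub_add_cancel]
    · rintro x ⟨hxΛ, hxw⟩
      obtain ⟨n, hn⟩ := hint γ (hNΛ hγN) x hxΛ
      refine ⟨-n, ?_⟩
      rw [hB, hsymm w x, hxw, hn]
      push_cast
      ring
  · rintro ⟨β, hβN, hβw, hβ2, hβ⟩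
    have hβΛ := hNΛ hβN
    -- By unimodularity, `β ∉ 2Λ` forces an odd value of `(β, ·)` on `Λ`.
    obtain ⟨y, hyΛ, hy⟩ : ∃ y ∈ Λ, ¬ ∃ n : ℤ, B β y = 2 * (n : ℚ) := by
      by_contra! hcon
      exact hβ2 (half_mem β hcon)
    obtain ⟨b, hb⟩ := hint β hβΛ y hyΛ
    obtain ⟨a, ha⟩ := hint y hyΛ w hwΛ
    have hperp : ∀ (u : V) (c : ℤ), u ∈ Λ → B u w = c → ∀ v ∈ Λ, B v w = 1 →
        ∃ n : ℤ, B β u = c * B β v + 2 * (n : ℚ) := by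
      intro u c hu huw v hv hvw
      obtain ⟨n, hn⟩ := hβ (u - c • v) ⟨Λ.sub_mem hu (Λ.smul_mem _ hv), by
        rw [hsymm, map_sub, hBz, hsymm w u, hsymm w v, huw, hvw]; ring⟩
      refine ⟨n, ?_⟩
      rw [map_sub, hBz] at hn
      push_cast at hn
      linarith
    have hbodd : ∃ m : ℤ, b = 2 * m + 1 := by
      rcases Int.even_or_odd' b with ⟨m, rfl | rfl⟩
      · exact absurd ⟨m, by rw [hb]; push_cast; ring⟩ hy
      · exact ⟨m, rfl⟩
    -- `(y, w)` is odd: otherwise a multiple of `w` moves `y` into `w⊥`, where `β` is even.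
    -- Subtracting a multiple of `w` from `y` then normalises `(y, w)` to `1`.
    obtain ⟨u, huΛ, huw, hub⟩ : ∃ u ∈ Λ, B u w = 1 ∧ B β u = b := by
      rcases Int.even_or_odd' a with ⟨k, hk⟩
      have hyk : B (y - k • w) w = a - 2 * k := by
        rw [hsymm, map_sub, hBz, hsymm w y, ha, hw2]; ring
      have hβk : B β (y - k • w) = b := by
        rw [map_sub, hBz, hβw, hb]; ring
      have hmem : y - k • w ∈ Λ := Λ.sub_mem hyΛ (Λ.smul_mem _ hwΛ)
      rcases hk with rfl | rfl
      · obtain ⟨n, hn⟩ := hβ (y - k • w) ⟨hmem, by rw [hyk]; push_cast; ring⟩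
        exact absurd ⟨n, by rw [hb, ← hβk, hn]; push_cast; ring⟩ hy
      · exact ⟨_, hmem, by rw [hyk]; push_cast; ring, hβk⟩
    obtain ⟨m, rfl⟩ := hbodd
    -- Hence `(β, z) ≡ (w, z)` modulo `2` for all `z ∈ Λ`, so `β + w ∈ 2Λ`.
    obtain ⟨γ, hγΛ, hγ⟩ := half_mem (β + w) (by
      intro z hz
      obtain ⟨c, hc⟩ := hint z hz w hwΛ
      obtain ⟨n, hn⟩ := hperp z c hz hc u huΛ huw
      refine ⟨c * (m + 1) + n, ?_⟩
      rw [map_add, LinearMap.add_apply, hsymm w z, hc, hn, hub]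
      push_cast
      ring)
    refine ⟨γ, hsat 2 (by norm_num) γ hγΛ (hγ ▸ N.add_mem hβN hwN), ?_⟩
    have h : B w (β + w) = 2 := by rw [map_add, hsymm w β, hβw, hw2]; ring
    rw [hγ, hBz, hsymm w γ] at h
    push_cast at h
    linarith
end

section
/- Let Λ be an even unimodular lattice and w ∈ Λ a primitive element with (w,w) = 2. If β ∈ w⊥ satisfies (β,x) ∈ 2ℤ for every x ∈ w⊥ and β ∉ 2Λ, then (β,β) ≡ −2 (mod 8). -/
/-- In a unimodular lattice, a vector pairing evenly with the whole lattice is twice a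
lattice vector. -/
lemma exists_eq_two_smul_of_even_pairing {V : Type*} [AddCommGroup V] [Module ℚ V]
    (B : V →ₗ[ℚ] V →ₗ[ℚ] ℚ) (Λ : Submodule ℤ V)
    (hspan : Submodule.span ℚ (Λ : Set V) = ⊤) (huni : dualIn B Λ = Λ) (v : V)
    (hv : ∀ x ∈ Λ, ∃ n : ℤ, B v x = 2 * (n : ℚ)) :
    ∃ γ ∈ Λ, v = (2 : ℤ) • γ := by
  refine ⟨(1 / 2 : ℚ) • v, ?_, ?_⟩
  · rw [← huni]
    refine ⟨by rw [hspan]; trivial, fun x hx => ?_⟩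
    obtain ⟨n, hn⟩ := hv x hx
    exact ⟨n, by rw [map_smul, LinearMap.smul_apply, hn, smul_eq_mul]; ring⟩
  · rw [← Int.cast_smul_eq_zsmul ℚ, smul_smul]
    norm_num

/-- A primitive vector of norm 2 in a unimodular lattice pairs to 1 with some lattice vector. -/
lemma exists_pairing_eq_one {V : Type*} [AddCommGroup V] [Module ℚ V]
    (B : V →ₗ[ℚ] V →ₗ[ℚ] ℚ) (Λ : Submodule ℤ V)
    (hspan : Submodule.span ℚ (Λ : Set V) = ⊤)
    (hint : ∀ x ∈ Λ, ∀ y ∈ Λ, ∃ n : ℤ, B x y = (n : ℚ)) (huni : dualIn B Λ = Λ)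
    (w : V) (hwΛ : w ∈ Λ) (hprim : ∀ n : ℤ, 2 ≤ n → ∀ x ∈ Λ, w ≠ n • x) (hw2 : B w w = 2) :
    ∃ c ∈ Λ, B w c = 1 := by
  by_contra! hc
  obtain ⟨γ, hγ, h⟩ := exists_eq_two_smul_of_even_pairing B Λ hspan huni w fun y hy => by
    obtain ⟨m, hm⟩ := hint w hwΛ y hy
    obtain ⟨k, rfl | rfl⟩ := m.even_or_odd'
    · exact ⟨k, by rw [hm]; push_cast; ring⟩
    · refine absurd ?_ (hc (y - k • w) (Λ.sub_mem hy (Λ.smul_mem k hwΛ)))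
      rw [← Int.cast_smul_eq_zsmul ℚ k w, map_sub, map_smul, hm, hw2, smul_eq_mul]
      push_cast
      ring
  exact hprim 2 le_rfl γ hγ h

/-- Let `Λ` be an even unimodular lattice and `w ∈ Λ` primitive with `(w,w) = 2`.
If `β ∈ w⊥` satisfies `(β,x) ∈ 2ℤ` for every `x ∈ w⊥` and `β ∉ 2Λ`, then
`(β,β) ≡ −2 (mod 8)`. -/
theorem statement_9 {V : Type*} [AddCommGroup V] [Module ℚ V]
    (B : V →ₗ[ℚ] V →ₗ[ℚ] ℚ) (Λ : Submodule ℤ V)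
    (hfg : Λ.FG)
    (hspan : Submodule.span ℚ (Λ : Set V) = ⊤)
    (hsymm : ∀ x y, B x y = B y x)
    (hnd : ∀ x, (∀ y, B x y = 0) → x = 0)
    (hint : ∀ x ∈ Λ, ∀ y ∈ Λ, ∃ n : ℤ, B x y = (n : ℚ))
    (huni : dualIn B Λ = Λ)
    (heven : ∀ x ∈ Λ, ∃ n : ℤ, B x x = ((2 * n : ℤ) : ℚ))
    (w : V) (hwΛ : w ∈ Λ)
    (hprim : ∀ n : ℤ, 2 ≤ n → ∀ x ∈ Λ, w ≠ n • x)
    (hw2 : B w w = 2)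
    (β : V) (hβ : β ∈ perpIn B Λ w)
    (hβ2 : ∀ x ∈ perpIn B Λ w, ∃ n : ℤ, B β x = ((2 * n : ℤ) : ℚ))
    (hβn2 : ¬ ∃ δ ∈ Λ, β = (2 : ℤ) • δ) :
    ∃ n : ℤ, B β β = ((8 * n - 2 : ℤ) : ℚ) := by
  obtain ⟨hβΛ, hβw⟩ := hβ
  obtain ⟨c, hc, hwc⟩ := exists_pairing_eq_one B Λ hspan hint huni w hwΛ hprim hw2
  obtain ⟨b, hb⟩ := hint β hβΛ c hc
  obtain ⟨γ, hγ, h⟩ :=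
      exists_eq_two_smul_of_even_pairing B Λ hspan huni (β - (b : ℚ) • w) fun x hx => by
    obtain ⟨m, hm⟩ := hint w hwΛ x hx
    -- The projection `x - (w,x) c` of `x` to `w⊥` along `c`.
    obtain ⟨n, hn⟩ := hβ2 (x - m • c) ⟨Λ.sub_mem hx (Λ.smul_mem m hc), by
      rw [← Int.cast_smul_eq_zsmul ℚ m c, hsymm, map_sub, map_smul, hm, hwc, smul_eq_mul]
      ring⟩
    rw [← Int.cast_smul_eq_zsmul ℚ m c, map_sub, map_smul, hb, smul_eq_mul] at hn
    refine ⟨n, ?_⟩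
    rw [map_sub, map_smul, LinearMap.sub_apply, LinearMap.smul_apply, hm, smul_eq_mul]
    push_cast at hn
    linarith
  rw [sub_eq_iff_eq_add] at h
  obtain ⟨k, rfl | rfl⟩ := b.even_or_odd'
  · refine absurd ⟨γ + k • w, Λ.add_mem hγ (Λ.smul_mem k hwΛ), ?_⟩ hβn2
    rw [h, Int.cast_smul_eq_zsmul, smul_add, smul_smul]
  · obtain ⟨q, hq⟩ := heven γ hγ
    have hnorm : B (β - ((2 * k + 1 : ℤ) : ℚ) • w) (β - ((2 * k + 1 : ℤ) : ℚ) • w)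
        = 4 * B γ γ := by
      rw [sub_eq_iff_eq_add.mpr h, ← Int.cast_smul_eq_zsmul ℚ]
      simp only [map_smul, LinearMap.smul_apply, smul_eq_mul]
      push_cast
      ring
    simp only [map_sub, map_smul, LinearMap.sub_apply, LinearMap.smul_apply, smul_eq_mul,
      hsymm w β, hβw, hw2, hq] at hnorm
    refine ⟨q - k ^ 2 - k, ?_⟩
    push_cast at hnorm ⊢
    linarith
end

section
/- Let Λ be an even unimodular lattice and w ∈ Λ a primitive element with (w,w) = 2. If β₁, β₂ ∈ w⊥ each satisfy (βᵢ,x) ∈ 2ℤ for every x ∈ w⊥ and βᵢ ∉ 2Λ (i = 1,2), then (β₁,β₂) ≡ 2 (mod 4). -/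
section EvenPairing

variable {V : Type*} [AddCommGroup V] [Module ℚ V]

/-- In a unimodular lattice, an element pairing evenly with the whole lattice is twice a lattice
element: its half lies in the dual lattice. -/
lemma exists_two_smul_of_even_pairing (B : V →ₗ[ℚ] V →ₗ[ℚ] ℚ) (Λ : Submodule ℤ V)
    (hspan : Submodule.span ℚ (Λ : Set V) = ⊤) (huni : dualIn B Λ = Λ)
    (v : V) (hv : ∀ x ∈ Λ, ∃ n : ℤ, B v x = ((2 * n : ℤ) : ℚ)) :
    ∃ δ ∈ Λ, v = (2 : ℤ) • δ := by
  refine ⟨(1 / 2 : ℚ) • v, ?_, ?_⟩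
  · rw [← huni]
    refine ⟨by rw [hspan]; exact Submodule.mem_top, fun x hx => ?_⟩
    obtain ⟨n, hn⟩ := hv x hx
    refine ⟨n, ?_⟩
    rw [map_smul, LinearMap.smul_apply, hn, smul_eq_mul]
    push_cast; ring
  · rw [← Int.cast_smul_eq_zsmul ℚ, smul_smul]
    norm_num

/-- An element outside `2Λ` that pairs evenly with `w⊥` is congruent to `w` modulo `2Λ`. -/
lemma exists_eq_two_smul_sub (B : V →ₗ[ℚ] V →ₗ[ℚ] ℚ) (Λ : Submodule ℤ V)
    (hspan : Submodule.span ℚ (Λ : Set V) = ⊤)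
    (hsymm : ∀ x y, B x y = B y x)
    (hint : ∀ x ∈ Λ, ∀ y ∈ Λ, ∃ n : ℤ, B x y = (n : ℚ))
    (huni : dualIn B Λ = Λ)
    (w u : V) (huΛ : u ∈ Λ) (hwΛ : w ∈ Λ) (hwu : B w u = 1)
    (β : V) (hβ : β ∈ Λ)
    (hβ2 : ∀ x ∈ perpIn B Λ w, ∃ n : ℤ, B β x = ((2 * n : ℤ) : ℚ))
    (hβn2 : ¬ ∃ δ ∈ Λ, β = (2 : ℤ) • δ) :
    ∃ γ ∈ Λ, β = (2 : ℚ) • γ - w := by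
  obtain ⟨c, hc⟩ := hint β hβ u huΛ
  -- Splitting `x = (w,x) u + (x - (w,x) u)` along `Λ = ℤu ⊕ w⊥`.
  have key : ∀ x ∈ Λ, ∃ m n : ℤ, B w x = m ∧ B β x = ((2 * n + m * c : ℤ) : ℚ) := by
    intro x hx
    obtain ⟨m, hm⟩ := hint w hwΛ x hx
    have hperp : x - m • u ∈ perpIn B Λ w := by
      refine ⟨Λ.sub_mem hx (Λ.smul_mem m huΛ), ?_⟩
      rw [hsymm, map_sub, ← Int.cast_smul_eq_zsmul ℚ, map_smul, hm, hwu, smul_eq_mul]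
      ring
    obtain ⟨n, hn⟩ := hβ2 _ hperp
    refine ⟨m, n, hm, ?_⟩
    rw [map_sub, ← Int.cast_smul_eq_zsmul ℚ, map_smul, hc, smul_eq_mul] at hn
    push_cast at hn ⊢
    linarith
  rcases Int.even_or_odd' c with ⟨k, rfl | rfl⟩
  · refine absurd (exists_two_smul_of_even_pairing B Λ hspan huni β fun x hx => ?_) hβn2
    obtain ⟨m, n, -, h⟩ := key x hx
    exact ⟨n + m * k, by rw [h]; push_cast; ring⟩
  · obtain ⟨γ, hγ, h⟩ := exists_two_smul_of_even_pairing B Λ hspan huni (β + w) fun x hx => by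
      obtain ⟨m, n, hm, h⟩ := key x hx
      exact ⟨n + m * k + m, by rw [map_add, LinearMap.add_apply, h, hm]; push_cast; ring⟩
    refine ⟨γ, hγ, ?_⟩
    rw [← Int.cast_smul_eq_zsmul ℚ] at h
    exact eq_sub_of_add_eq (by simpa using h)

end EvenPairing

/-- Let `Λ` be an even unimodular lattice and `w ∈ Λ` primitive with `(w,w) = 2`.
If `β₁, β₂ ∈ w⊥` each pair evenly with `w⊥` and do not lie in `2Λ`, then
`(β₁,β₂) ≡ 2 (mod 4)`. -/
theorem statement_10 {V : Type*} [AddCommGroup V] [Module ℚ V]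
    (B : V →ₗ[ℚ] V →ₗ[ℚ] ℚ) (Λ : Submodule ℤ V)
    (hfg : Λ.FG)
    (hspan : Submodule.span ℚ (Λ : Set V) = ⊤)
    (hsymm : ∀ x y, B x y = B y x)
    (hnd : ∀ x, (∀ y, B x y = 0) → x = 0)
    (hint : ∀ x ∈ Λ, ∀ y ∈ Λ, ∃ n : ℤ, B x y = (n : ℚ))
    (huni : dualIn B Λ = Λ)
    (heven : ∀ x ∈ Λ, ∃ n : ℤ, B x x = ((2 * n : ℤ) : ℚ))
    (w : V) (hwΛ : w ∈ Λ)
    (hprim : ∀ n : ℤ, 2 ≤ n → ∀ x ∈ Λ, w ≠ n • x)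
    (hw2 : B w w = 2)
    (β₁ β₂ : V) (hβ₁ : β₁ ∈ perpIn B Λ w) (hβ₂ : β₂ ∈ perpIn B Λ w)
    (hβ₁2 : ∀ x ∈ perpIn B Λ w, ∃ n : ℤ, B β₁ x = ((2 * n : ℤ) : ℚ))
    (hβ₂2 : ∀ x ∈ perpIn B Λ w, ∃ n : ℤ, B β₂ x = ((2 * n : ℤ) : ℚ))
    (hβ₁n2 : ¬ ∃ δ ∈ Λ, β₁ = (2 : ℤ) • δ)
    (hβ₂n2 : ¬ ∃ δ ∈ Λ, β₂ = (2 : ℤ) • δ) :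
    ∃ n : ℤ, B β₁ β₂ = ((4 * n + 2 : ℤ) : ℚ) := by
  obtain ⟨u, huΛ, hwu⟩ : ∃ u ∈ Λ, B w u = 1 := by
    by_contra hno
    obtain ⟨δ, hδ, h⟩ := exists_two_smul_of_even_pairing B Λ hspan huni w fun y hy => by
      obtain ⟨m, hm⟩ := hint w hwΛ y hy
      rcases Int.even_or_odd' m with ⟨k, rfl | rfl⟩
      · exact ⟨k, hm⟩
      · refine absurd ⟨y - k • w, Λ.sub_mem hy (Λ.smul_mem k hwΛ), ?_⟩ hno
        rw [map_sub, ← Int.cast_smul_eq_zsmul ℚ, map_smul, hm, hw2, smul_eq_mul]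
        push_cast; ring
    exact hprim 2 le_rfl δ hδ h
  obtain ⟨γ₁, hγ₁, rfl⟩ := exists_eq_two_smul_sub B Λ hspan hsymm hint huni w u huΛ hwΛ hwu
    β₁ hβ₁.1 hβ₁2 hβ₁n2
  obtain ⟨γ₂, hγ₂, rfl⟩ := exists_eq_two_smul_sub B Λ hspan hsymm hint huni w u huΛ hwΛ hwu
    β₂ hβ₂.1 hβ₂2 hβ₂n2
  have h₁ := hβ₁.2
  have h₂ := hβ₂.2
  obtain ⟨n, hn⟩ := hint γ₁ hγ₁ γ₂ hγ₂
  refine ⟨n - 1, ?_⟩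
  simp only [map_sub, map_smul, LinearMap.sub_apply, LinearMap.smul_apply, smul_eq_mul, hw2, hn,
    hsymm w γ₂] at h₁ h₂ ⊢
  push_cast
  linarith
end

section
/- Let L be a lattice having index 2 in its dual lattice L*, and let M ⊆ L be a saturated ℤ-submodule (i.e. L/M is torsion-free). Inside (L ⊗ ℚ) ⊕ ℚσ define Γ := {(α, kσ/2) : α ∈ L*, k ∈ ℤ, and k is even if and only if α ∈ L}, and set Γ_M := {(α, kσ/2) ∈ Γ : α ∈ M ⊗ ℚ}. Then the quotient Γ_M/(M ⊕ ℤσ) is either trivial or isomorphic to ℤ/2ℤ, and it is isomorphic to ℤ/2ℤ if and only if there exists a primitive element β ∈ M with (β,γ) ∈ 2ℤ for every γ ∈ L. -/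
/-!
Since `Λ` has index 2 in `Λ*`, for `a, b ∈ Λ*` one has `a + b ∈ Λ` iff `a` and `b` are both in or
both outside `Λ`. This makes `Γ_M` a subgroup. Saturation gives `Λ ∩ (M ⊗ ℚ) = M`, so an element
`(α, kσ/2)` of `Γ_M` lies in `M ⊕ ℤσ` iff `k` is even; hence `M ⊕ ℤσ` has index at most 2 in `Γ_M`,
and index exactly 2 iff some `α ∈ Λ* ∩ (M ⊗ ℚ)` is not in `Λ`.

Given such an `α`, the vector `2α` lies in `M \ 2M` and pairs evenly with `Λ`; dividing out its
(necessarily odd) divisibility in `M` keeps both properties and yields the primitive `β`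
(`exists_primitive_of_even`). Conversely, a primitive `β` pairing evenly with `Λ` gives `α = β/2`.
-/

theorem exists_zsmul_mem_of_mem_span {V : Type*} [AddCommGroup V] [Module ℚ V]
    (M : Submodule ℤ V) {x : V} (hx : x ∈ Submodule.span ℚ (M : Set V)) :
    ∃ n : ℤ, n ≠ 0 ∧ n • x ∈ M := by
  induction hx using Submodule.span_induction with
  | mem x h => exact ⟨1, one_ne_zero, by simpa using h⟩
  | zero => exact ⟨1, one_ne_zero, by simp⟩
  | add x y _ _ hx hy =>
    obtain ⟨m, hm, hmx⟩ := hx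
    obtain ⟨n, hn, hny⟩ := hy
    refine ⟨m * n, mul_ne_zero hm hn, ?_⟩
    rw [smul_add, mul_smul m n y, mul_comm, mul_smul n m x]
    exact M.add_mem (M.smul_mem _ hmx) (M.smul_mem _ hny)
  | smul a x _ hx =>
    obtain ⟨m, hm, hmx⟩ := hx
    refine ⟨m * a.den, mul_ne_zero hm (by exact_mod_cast a.den_nz), ?_⟩
    have h : (m * (a.den : ℤ)) • a • x = a.num • m • x := by
      simp only [← Int.cast_smul_eq_zsmul ℚ, smul_smul]
      congr 1
      push_cast
      rw [mul_assoc, Rat.den_mul_eq_num, mul_comm]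
    rw [h]
    exact M.smul_mem _ hmx

/-- A proper submodule such that any two elements outside it are congruent has quotient `ℤ/2`. -/
theorem nonempty_quotient_equiv_zmod_two {G : Type*} [AddCommGroup G] (N : Submodule ℤ G)
    (h : ∀ p q, p ∉ N → q ∉ N → p - q ∈ N) {p : G} (hp : p ∉ N) :
    Nonempty ((G ⧸ N) ≃ₗ[ℤ] ZMod 2) := by
  have hcard : Nat.card (G ⧸ N) = 2 := by
    rw [Nat.card_eq_two_iff]
    refine ⟨0, N.mkQ p, ?_, ?_⟩
    · intro h0
      exact hp ((Submodule.Quotient.mk_eq_zero N).1 h0.symm)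
    · refine Set.eq_univ_of_forall fun x => ?_
      obtain ⟨q, rfl⟩ := N.mkQ_surjective x
      by_cases hq : q ∈ N
      · exact Or.inl ((Submodule.Quotient.mk_eq_zero N).2 hq)
      · exact Or.inr ((Submodule.Quotient.eq N).2 (h q p hq hp))
  have : Fact (Nat.Prime 2) := ⟨Nat.prime_two⟩
  have e : ZMod 2 ≃+ (G ⧸ N) := addEquivOfPrimeCardEq (p := 2) (by simp) hcard
  exact ⟨e.symm.toIntLinearEquiv⟩

/-- A vector of `M \ 2M` pairing evenly with `Λ` and nontrivially with some `y ∈ Λ` can be replaced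
by a primitive one: while `x = n x'` with `n ≥ 2`, the integer `n` is odd, so `x'` inherits the
hypotheses, and `|B x y|` decreases. -/
theorem exists_primitive_of_even {V : Type*} [AddCommGroup V] [Module ℚ V]
    (B : V →ₗ[ℚ] V →ₗ[ℚ] ℚ) (Λ M : Submodule ℤ V) (hMΛ : M ≤ Λ)
    (hint : ∀ x ∈ Λ, ∀ y ∈ Λ, ∃ n : ℤ, B x y = (n : ℚ))
    {y : V} (hy : y ∈ Λ) (N : ℕ) :
    ∀ x ∈ M, (∀ z ∈ M, x ≠ (2 : ℤ) • z) →
      (∀ γ ∈ Λ, ∃ n : ℤ, B x γ = ((2 * n : ℤ) : ℚ)) →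
      (∃ k : ℤ, B x y = k ∧ k ≠ 0 ∧ k.natAbs = N) →
      ∃ β ∈ M, (∀ n : ℤ, 2 ≤ n → ∀ x ∈ M, β ≠ n • x) ∧
          ∀ γ ∈ Λ, ∃ n : ℤ, B β γ = ((2 * n : ℤ) : ℚ) := by
  induction N using Nat.strong_induction_on with
  | _ N ih =>
  intro x hx hx2 heven ⟨k, hk, hk0, hkN⟩
  by_cases hprim : ∀ n : ℤ, 2 ≤ n → ∀ z ∈ M, x ≠ n • z
  · exact ⟨x, hx, hprim, heven⟩
  push Not at hprim
  obtain ⟨n, hn, z, hz, rfl⟩ := hprim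
  have hB : ∀ γ, B (n • z) γ = n * B z γ := fun γ => by
    rw [← Int.cast_smul_eq_zsmul ℚ, map_smul, LinearMap.smul_apply, smul_eq_mul]
  have hodd : Odd n := by
    rw [← Int.not_even_iff_odd]
    rintro ⟨m, rfl⟩
    exact hx2 (m • z) (M.smul_mem _ hz) (by rw [smul_smul, two_mul])
  obtain ⟨l, hl⟩ := hint z (hMΛ hz) y hy
  have hkl : k = n * l := by
    rw [hB, hl] at hk
    exact_mod_cast hk.symm
  have hl0 : l ≠ 0 := by
    rintro rfl
    simp [hkl] at hk0
  refine ih l.natAbs ?_ z hz ?_ ?_ ⟨l, hl, hl0, rfl⟩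
  · rw [← hkN, hkl, Int.natAbs_mul]
    have h1 : 0 < l.natAbs := Int.natAbs_pos.2 hl0
    have h2 : 2 ≤ n.natAbs := by omega
    nlinarith
  · rintro w hw rfl
    exact hx2 (n • w) (M.smul_mem _ hw) (smul_comm _ _ _)
  · intro γ hγ
    obtain ⟨a, ha⟩ := heven γ hγ
    obtain ⟨b, hb⟩ := hint z (hMΛ hz) γ hγ
    rw [hB, hb] at ha
    have hab : n * b = 2 * a := by exact_mod_cast ha
    have hbe : Even b := by
      have h3 : Even (n * b) := hab ▸ even_two_mul a
      exact (Int.even_mul.1 h3).resolve_left (Int.not_even_iff_odd.2 hodd)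
    obtain ⟨c, rfl⟩ := hbe
    exact ⟨c, by rw [hb, two_mul]⟩

/-- Let `L` (here `Λ`) be a lattice of index 2 in its dual, `M ⊆ L` a saturated
ℤ-submodule.  With `Γ` as before and `Γ_M := {(α,kσ/2) ∈ Γ : α ∈ M ⊗ ℚ}`, the quotient
`Γ_M/(M ⊕ ℤσ)` is either trivial or `≅ ℤ/2ℤ`, and it is `≅ ℤ/2ℤ` iff there is a primitive
`β ∈ M` with `(β,γ) ∈ 2ℤ` for every `γ ∈ L`. -/
theorem statement_12 {V : Type*} [AddCommGroup V] [Module ℚ V]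
    (B : V →ₗ[ℚ] V →ₗ[ℚ] ℚ) (Λ : Submodule ℤ V)
    (hfg : Λ.FG)
    (hspan : Submodule.span ℚ (Λ : Set V) = ⊤)
    (hsymm : ∀ x y, B x y = B y x)
    (hnd : ∀ x, (∀ y, B x y = 0) → x = 0)
    (hint : ∀ x ∈ Λ, ∀ y ∈ Λ, ∃ n : ℤ, B x y = (n : ℚ))
    (hidx : Nat.card ((↥(dualIn B Λ)) ⧸ Submodule.comap (dualIn B Λ).subtype Λ) = 2)
    (M : Submodule ℤ V) (hMΛ : M ≤ Λ)
    (hsat : ∀ n : ℤ, n ≠ 0 → ∀ x ∈ Λ, n • x ∈ M → x ∈ M) :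
    ∃ Γ' : Submodule ℤ (V × ℚ),
      (Γ' : Set (V × ℚ)) = {p ∈ GammaSet B Λ | p.1 ∈ Submodule.span ℚ (M : Set V)} ∧
      M.prod (Submodule.span ℤ ({1} : Set ℚ)) ≤ Γ' ∧
      (Subsingleton (↥Γ' ⧸ Submodule.comap Γ'.subtype (M.prod (Submodule.span ℤ ({1} : Set ℚ)))) ∨
        Nonempty ((↥Γ' ⧸ Submodule.comap Γ'.subtype (M.prod (Submodule.span ℤ ({1} : Set ℚ)))) ≃ₗ[ℤ] ZMod 2)) ∧
      (Nonempty ((↥Γ' ⧸ Submodule.comap Γ'.subtype (M.prod (Submodule.span ℤ ({1} : Set ℚ)))) ≃ₗ[ℤ] ZMod 2) ↔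
        ∃ β ∈ M, (∀ n : ℤ, 2 ≤ n → ∀ x ∈ M, β ≠ n • x) ∧
          ∀ γ ∈ Λ, ∃ n : ℤ, B β γ = ((2 * n : ℤ) : ℚ)) := by
  have hΛdual : Λ ≤ dualIn B Λ := fun x hx => ⟨by rw [hspan]; trivial, hint x hx⟩
  have hadd : ∀ a ∈ dualIn B Λ, ∀ b ∈ dualIn B Λ, (a + b ∈ Λ ↔ (a ∈ Λ ↔ b ∈ Λ)) := by
    intro a ha b hb
    have hi : (Submodule.comap (dualIn B Λ).subtype Λ).toAddSubgroup.index = 2 := hidx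
    exact AddSubgroup.add_mem_iff_of_index_two hi (a := ⟨a, ha⟩) (b := ⟨b, hb⟩)
  have hMspan : ∀ x ∈ Λ, x ∈ Submodule.span ℚ (M : Set V) → x ∈ M := by
    intro x hx hxs
    obtain ⟨n, hn, hnx⟩ := exists_zsmul_mem_of_mem_span M hxs
    exact hsat n hn x hx hnx
  have hΓadd : ∀ p ∈ GammaSet B Λ, ∀ q ∈ GammaSet B Λ, p + q ∈ GammaSet B Λ := by
    rintro p ⟨hp, k, hk, hkp⟩ q ⟨hq, l, hl, hlq⟩
    refine ⟨add_mem hp hq, k + l, ?_, ?_⟩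
    · rw [Prod.snd_add, hk, hl]
      push_cast
      ring
    · rw [Prod.fst_add, hadd _ hp _ hq, ← hkp, ← hlq, Int.even_add]
  have hΓneg : ∀ p ∈ GammaSet B Λ, -p ∈ GammaSet B Λ := by
    rintro p ⟨hp, k, hk, hkp⟩
    refine ⟨neg_mem hp, -k, ?_, ?_⟩
    · rw [Prod.snd_neg, hk]
      push_cast
      ring
    · rw [Prod.fst_neg, neg_mem_iff, even_neg, hkp]
  let Γ₀ : AddSubgroup (V × ℚ) :=
    { carrier := {p ∈ GammaSet B Λ | p.1 ∈ Submodule.span ℚ (M : Set V)}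
      zero_mem' := ⟨⟨zero_mem _, 0, by simp, by simp⟩, zero_mem _⟩
      add_mem' := fun {p q} hp hq => ⟨hΓadd p hp.1 q hq.1, add_mem hp.2 hq.2⟩
      neg_mem' := fun {p} hp => ⟨hΓneg p hp.1, by
        rw [Prod.fst_neg]
        exact neg_mem hp.2⟩ }
  have hσ : ∀ q : ℚ, q ∈ Submodule.span ℤ ({1} : Set ℚ) ↔ ∃ n : ℤ, q = n := by
    intro q
    rw [Submodule.mem_span_singleton]
    simp [eq_comm]
  have hle : M.prod (Submodule.span ℤ ({1} : Set ℚ)) ≤ AddSubgroup.toIntSubmodule Γ₀ := by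
    rintro p ⟨hp1, hp2⟩
    obtain ⟨n, hn⟩ := (hσ _).1 hp2
    refine ⟨⟨hΛdual (hMΛ hp1), 2 * n, ?_, ?_⟩, Submodule.subset_span hp1⟩
    · rw [hn]
      push_cast
      ring
    · exact iff_of_true (even_two_mul n) (hMΛ hp1)
  -- An element of `Γ_M` is in `M ⊕ ℤσ` as soon as its first component is in `Λ`.
  have hmem : ∀ p ∈ Γ₀, p.1 ∈ Λ → p ∈ M.prod (Submodule.span ℤ ({1} : Set ℚ)) := by
    rintro p ⟨⟨-, k, hk, hkp⟩, hps⟩ hpΛ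
    refine ⟨hMspan _ hpΛ hps, (hσ _).2 ?_⟩
    obtain ⟨m, rfl⟩ := hkp.2 hpΛ
    exact ⟨m, by rw [hk]; push_cast; ring⟩
  have hdiff : ∀ p q : AddSubgroup.toIntSubmodule Γ₀,
      p ∉ Submodule.comap (AddSubgroup.toIntSubmodule Γ₀).subtype
        (M.prod (Submodule.span ℤ ({1} : Set ℚ))) →
      q ∉ Submodule.comap (AddSubgroup.toIntSubmodule Γ₀).subtype
        (M.prod (Submodule.span ℤ ({1} : Set ℚ))) →
      p - q ∈ Submodule.comap (AddSubgroup.toIntSubmodule Γ₀).subtype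
        (M.prod (Submodule.span ℤ ({1} : Set ℚ))) := by
    rintro ⟨p, hp⟩ ⟨q, hq⟩ hpN hqN
    have hpΛ : p.1 ∉ Λ := fun h => hpN (hmem p hp h)
    have hqΛ : q.1 ∉ Λ := fun h => hqN (hmem q hq h)
    refine hmem (p - q) (Γ₀.sub_mem hp hq) ?_
    have h := hadd p.1 hp.1.1 (-q.1) (neg_mem hq.1.1)
    rw [neg_mem_iff, ← sub_eq_add_neg] at h
    exact h.2 (iff_of_false hpΛ hqΛ)
  refine ⟨AddSubgroup.toIntSubmodule Γ₀, rfl, hle, ?_, ?_, ?_⟩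
  · by_cases hN : ∃ p, p ∉ Submodule.comap (AddSubgroup.toIntSubmodule Γ₀).subtype
        (M.prod (Submodule.span ℤ ({1} : Set ℚ)))
    · obtain ⟨p, hp⟩ := hN
      exact Or.inr (nonempty_quotient_equiv_zmod_two _ hdiff hp)
    · push Not at hN
      exact Or.inl (Submodule.Quotient.subsingleton_iff.2 (Submodule.eq_top_iff'.2 hN))
  · rintro ⟨e⟩
    have hN : ∃ p, p ∉ Submodule.comap (AddSubgroup.toIntSubmodule Γ₀).subtype
        (M.prod (Submodule.span ℤ ({1} : Set ℚ))) := by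
      by_contra! hN
      have hs := Submodule.Quotient.subsingleton_iff.2 (Submodule.eq_top_iff'.2 hN)
      exact zero_ne_one (α := ZMod 2) (e.symm.injective (hs.elim _ _))
    obtain ⟨⟨p, hp⟩, hpN⟩ := hN
    have hpΛ : p.1 ∉ Λ := fun h => hpN (hmem p hp h)
    have h2Λ : (2 : ℤ) • p.1 ∈ Λ := by
      rw [two_smul]
      exact (hadd _ hp.1.1 _ hp.1.1).2 Iff.rfl
    have h2M : (2 : ℤ) • p.1 ∈ M := by
      refine hMspan _ h2Λ ?_
      rw [two_smul]
      exact add_mem hp.2 hp.2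
    have hp0 : (2 : ℤ) • p.1 ≠ 0 := by
      intro h0
      rw [← Int.cast_smul_eq_zsmul ℚ] at h0
      have h1 : p.1 = 0 := (smul_eq_zero.1 h0).resolve_left (by norm_num)
      exact hpΛ (h1 ▸ Λ.zero_mem)
    obtain ⟨y, hy, hBy⟩ : ∃ y ∈ Λ, B ((2 : ℤ) • p.1) y ≠ 0 := by
      by_contra! hall
      refine hp0 (hnd _ fun y => ?_)
      have hker : Submodule.span ℚ (Λ : Set V) ≤ LinearMap.ker (B ((2 : ℤ) • p.1)) :=
        Submodule.span_le.2 hall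
      rw [hspan] at hker
      exact hker trivial
    obtain ⟨k, hk⟩ := hint _ h2Λ y hy
    refine exists_primitive_of_even B Λ M hMΛ hint hy k.natAbs _ h2M ?_ ?_ ⟨k, hk, ?_, rfl⟩
    · intro z hz h
      simp only [← Int.cast_smul_eq_zsmul ℚ] at h
      have h1 : p.1 = z := smul_right_injective V (r := ((2 : ℤ) : ℚ)) (by norm_num) h
      exact hpΛ (h1 ▸ hMΛ hz)
    · intro γ hγ
      obtain ⟨n, hn⟩ := hp.1.1.2 γ hγ
      refine ⟨n, ?_⟩
      rw [← Int.cast_smul_eq_zsmul ℚ, map_smul, LinearMap.smul_apply, smul_eq_mul, hn]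
      push_cast
      ring
    · rintro rfl
      exact hBy (by simpa using hk)
  · rintro ⟨β, hβ, hprim, heven⟩
    have hβ2 : (2 : ℤ) • ((1 / 2 : ℚ) • β) = β := by
      rw [← Int.cast_smul_eq_zsmul ℚ, smul_smul]
      norm_num
    have hnot : (1 / 2 : ℚ) • β ∉ Λ := fun h =>
      hprim 2 le_rfl _ (hsat 2 two_ne_zero _ h (by rwa [hβ2])) hβ2.symm
    have hp : ((1 / 2 : ℚ) • β, (1 / 2 : ℚ)) ∈ Γ₀ := by
      refine ⟨⟨⟨by rw [hspan]; trivial, fun γ hγ => ?_⟩, 1, by norm_num, ?_⟩,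
        Submodule.smul_mem _ _ (Submodule.subset_span hβ)⟩
      · obtain ⟨n, hn⟩ := heven γ hγ
        refine ⟨n, ?_⟩
        rw [map_smul, LinearMap.smul_apply, smul_eq_mul, hn]
        push_cast
        ring
      · exact iff_of_false Int.not_even_one hnot
    exact nonempty_quotient_equiv_zmod_two _ hdiff (p := ⟨_, hp⟩) fun h => hnot (hMΛ h.1)
end
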